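/- If T : ℝ ⇒ ℝ belongs to the class 𝒯 and is maximal monotone, then there exists a proper, lower semicontinuous, convex function f : ℝ → (-∞,+∞] such that T = ∂f; moreover, every proper, lower semicontinuous, convex function f with ∂f = T belongs to the class F. -/

import Mathlib

/-!
Since `T` is maximal, the maximal operator in the definition of the class `𝒯` that extends it
is `T` itself, so `T` is constant, strictly increasing and continuous, or empty on each interval
of a breakpoint set `B`.

Existence. The domain of a maximal monotone operator on the line is convex (`maxMono_dom`): a
missing point between two points of the domain could be added with the supremum of the values to
its left. A selection `t` of `T` is monotone on that interval, hence locally integrable there, and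
its primitive `h` satisfies `u (y - x) ≤ h y - h x` for `u ∈ T x` (`exists_primitive`). The
supremum `f` of the affine functions `u (· - x) + h x` over the graph of `T` is proper, convex and
lower semicontinuous and agrees with `h` on the domain, so `T ⊆ ∂f`. As `∂f` is monotone,
maximality gives equality.

Membership in `F`. The same breakpoints `B` work. A lower semicontinuous convex function on the
line is continuous relative to its domain, because the chord inequality gives upper semicontinuity
from each side (`continuousOn_effDom`). Where `∂f` is a constant singleton, `f` is affine; where
`∂f` is a continuous strictly increasing function `g`, the subgradient inequalities at two points
squeeze the difference quotient of `f` and give `f' = g`; and where `∂f` is empty, `f` is `+∞`,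
because `∂f` is nonempty at interior points of the domain (`subdiff_nonempty`).
-/


noncomputable section


/-- Finite sets of breakpoints `-∞ = b₀ < b₁ < ⋯ < b_m = +∞`. -/
structure Breakpoints where
  m : ℕ
  hm : 0 < m
  pts : ℕ → EReal
  bot : pts 0 = ⊥
  top : pts m = ⊤
  mono : ∀ i j : ℕ, i < j → j ≤ m → pts i < pts j

/-- The `i`-th open interval `(bᵢ, bᵢ₊₁)` determined by the breakpoints. -/
def Breakpoints.itv (B : Breakpoints) (i : ℕ) : Set ℝ :=
  {x : ℝ | B.pts i < (x : EReal) ∧ (x : EReal) < B.pts (i + 1)}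

/-- Convexity for extended-real-valued functions on `ℝ`. -/
def ERealConvex (f : ℝ → EReal) : Prop :=
  ∀ x y a b : ℝ, 0 ≤ a → 0 ≤ b → a + b = 1 →
    f (a * x + b * y) ≤ (a : EReal) * f x + (b : EReal) * f y

/-- The effective domain of an extended-real-valued function nowhere equal to `-∞`. -/
def effDom (f : ℝ → EReal) : Set ℝ := {x : ℝ | f x ≠ ⊤}

/-- `f` is (finite and) affine on `s`. -/
def IsAffineOn (f : ℝ → EReal) (s : Set ℝ) : Prop :=
  ∃ c d : ℝ, ∀ x ∈ s, f x = ((c * x + d : ℝ) : EReal)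

/-- `f` is (finite,) strictly convex and differentiable on `s`. -/
def IsStrictConvexDiffOn (f : ℝ → EReal) (s : Set ℝ) : Prop :=
  ∃ g : ℝ → ℝ, (∀ x ∈ s, f x = (g x : EReal)) ∧ StrictConvexOn ℝ s g ∧
    ∀ x ∈ s, DifferentiableAt ℝ g x

/-- Membership in the class `F(A)` for the breakpoint set `A = B`. -/
def MemFA (B : Breakpoints) (f : ℝ → EReal) : Prop :=
  (∀ x, f x ≠ ⊥) ∧ LowerSemicontinuous f ∧ ERealConvex f ∧
  ContinuousOn f (effDom f) ∧
  ∀ i : ℕ, i < B.m →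
    IsAffineOn f (B.itv i) ∨ IsStrictConvexDiffOn f (B.itv i) ∨
      ∀ x ∈ B.itv i, f x = ⊤

/-- Membership in the class `F`. -/
def MemF (f : ℝ → EReal) : Prop := ∃ B : Breakpoints, MemFA B f

/-- The convex subdifferential of `f : ℝ → (-∞,+∞]` (empty outside the effective domain). -/
def subdiff (f : ℝ → EReal) (x : ℝ) : Set ℝ :=
  {φ : ℝ | f x ≠ ⊤ ∧ ∀ y : ℝ, ((φ * (y - x) : ℝ) : EReal) + f x ≤ f y}

/-- `T` is a monotone operator. -/
def MonotoneOp (T : ℝ → Set ℝ) : Prop :=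
  ∀ ⦃x u y v : ℝ⦄, u ∈ T x → v ∈ T y → 0 ≤ (u - v) * (x - y)

/-- `T` is a maximal monotone operator: its graph is not properly contained in the
graph of any monotone operator. -/
def MaxMonotoneOp (T : ℝ → Set ℝ) : Prop :=
  MonotoneOp T ∧
    ∀ S : ℝ → Set ℝ, MonotoneOp S → (∀ x, T x ⊆ S x) → ∀ x, S x ⊆ T x

/-- `T` is single-valued and constant on `s`. -/
def SingleConstOn (T : ℝ → Set ℝ) (s : Set ℝ) : Prop :=
  ∃ c : ℝ, ∀ x ∈ s, T x = {c}

/-- `T` is single-valued, continuous and strictly monotone on `s`. -/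
def SingleContStrictMonoOn (T : ℝ → Set ℝ) (s : Set ℝ) : Prop :=
  ∃ g : ℝ → ℝ, (∀ x ∈ s, T x = {g x}) ∧ ContinuousOn g s ∧ StrictMonoOn g s

/-- `T` is identically equal to the empty set on `s`. -/
def EmptyOn (T : ℝ → Set ℝ) (s : Set ℝ) : Prop := ∀ x ∈ s, T x = ∅

/-- Membership in the class `𝒯(B)`. -/
def MemTB (B : Breakpoints) (T : ℝ → Set ℝ) : Prop :=
  ∃ T' : ℝ → Set ℝ, MaxMonotoneOp T' ∧ (∀ x, T x ⊆ T' x) ∧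
    ∀ i : ℕ, i < B.m →
      SingleConstOn T' (B.itv i) ∨ SingleContStrictMonoOn T' (B.itv i) ∨
        EmptyOn T' (B.itv i)

/-- Membership in the class `𝒯`. -/
def MemT (T : ℝ → Set ℝ) : Prop := ∃ B : Breakpoints, MemTB B T

open Set Filter Topology

/-! ### Existence of a potential -/

lemma MaxMonotoneOp.mem_of_related {T : ℝ → Set ℝ} (hT : MaxMonotoneOp T) {x u : ℝ}
    (h : ∀ y v, v ∈ T y → 0 ≤ (u - v) * (x - y)) : u ∈ T x := by
  refine hT.2 (fun z => {w | w ∈ T z ∨ (z = x ∧ w = u)}) ?_ (fun z w hw => Or.inl hw) x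
    (Or.inr ⟨rfl, rfl⟩)
  rintro a p b q (hp | ⟨rfl, rfl⟩) (hq | ⟨rfl, rfl⟩)
  · exact hT.1 hp hq
  · have := h _ _ hp
    nlinarith
  · exact h _ _ hq
  · simp

lemma MaxMonotoneOp.exists_mem {T : ℝ → Set ℝ} (hT : MaxMonotoneOp T) : ∃ x u, u ∈ T x := by
  by_contra! hne
  exact hne 0 0 (hT.mem_of_related fun y v hv => absurd hv (hne y v))

lemma MonotoneOp.le_of_lt {T : ℝ → Set ℝ} (hT : MonotoneOp T) {x y u v : ℝ}
    (hu : u ∈ T x) (hv : v ∈ T y) (hxy : x < y) : u ≤ v := by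
  have := hT hu hv
  by_contra! hlt
  nlinarith [mul_pos (sub_pos.2 hlt) (sub_pos.2 hxy)]

/-- The domain of a maximal monotone operator on the line is an interval. -/
lemma maxMono_dom {T : ℝ → Set ℝ} (hT : MaxMonotoneOp T) {x s y : ℝ}
    (hx : (T x).Nonempty) (hy : (T y).Nonempty) (hxs : x ≤ s) (hsy : s ≤ y) :
    (T s).Nonempty := by
  rcases hxs.eq_or_lt with rfl | hxs
  · exact hx
  rcases hsy.eq_or_lt with rfl | hsy
  · exact hy
  obtain ⟨u, hu⟩ := hx
  obtain ⟨v, hv⟩ := hy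
  set L : Set ℝ := {w | ∃ z, z < s ∧ w ∈ T z} with hL
  have hLne : L.Nonempty := ⟨u, x, hxs, hu⟩
  have hub : ∀ z w, s < z → w ∈ T z → w ∈ upperBounds L := by
    rintro z w hz hw p ⟨q, hq, hp⟩
    exact hT.1.le_of_lt hp hw (hq.trans hz)
  have hbdd : BddAbove L := ⟨v, hub y v hsy hv⟩
  refine ⟨sSup L, hT.mem_of_related fun z w hw => ?_⟩
  rcases lt_trichotomy z s with hz | rfl | hz
  · exact mul_nonneg (sub_nonneg.2 (le_csSup hbdd ⟨z, hz, hw⟩)) (sub_pos.2 hz).le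
  · simp
  · exact mul_nonneg_of_nonpos_of_nonpos (sub_nonpos.2 (csSup_le hLne (hub z w hz hw)))
      (sub_neg.2 hz).le

/-- A real-valued primitive of a maximal monotone operator on its domain: the integral of a
selection. -/
lemma exists_primitive {T : ℝ → Set ℝ} (hT : MaxMonotoneOp T) :
    ∃ h : ℝ → ℝ, ∀ x y u, u ∈ T x → (T y).Nonempty → u * (y - x) ≤ h y - h x := by
  obtain ⟨x₀, u₀, h₀⟩ := hT.exists_mem
  have hsel : ∀ x, ∃ t, (T x).Nonempty → t ∈ T x := fun x => by
    by_cases hx : (T x).Nonempty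
    · exact ⟨hx.some, fun _ => hx.some_mem⟩
    · exact ⟨0, fun h => absurd h hx⟩
  choose t ht using hsel
  have hdom : OrdConnected {x | (T x).Nonempty} :=
    ⟨fun x hx y hy s hs => maxMono_dom hT hx hy hs.1 hs.2⟩
  have hmono : MonotoneOn t {x | (T x).Nonempty} := by
    intro x hx y hy hxy
    rcases hxy.eq_or_lt with rfl | hlt
    · exact le_rfl
    · exact hT.1.le_of_lt (ht x hx) (ht y hy) hlt
  have hint : ∀ x y, (T x).Nonempty → (T y).Nonempty →
      IntervalIntegrable t MeasureTheory.volume x y := fun x y hx hy =>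
    (hmono.mono (hdom.uIcc_subset hx hy)).intervalIntegrable
  refine ⟨fun x => ∫ s in x₀..x, t s, fun x y u hu hy => ?_⟩
  have hx : (T x).Nonempty := ⟨u, hu⟩
  have hx₀ : (T x₀).Nonempty := ⟨u₀, h₀⟩
  rw [intervalIntegral.integral_interval_sub_left (hint _ _ hx₀ hy) (hint _ _ hx₀ hx)]
  rcases le_total x y with hxy | hyx
  · have := intervalIntegral.integral_mono_on_of_le_Ioo (μ := MeasureTheory.volume) hxy
      (f := fun _ => u) (g := t) (by simp) (hint _ _ hx hy)
      (fun s hs => hT.1.le_of_lt hu (ht s (hdom.out hx hy ⟨hs.1.le, hs.2.le⟩)) hs.1)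
    simp only [intervalIntegral.integral_const, smul_eq_mul] at this
    linarith
  · have := intervalIntegral.integral_mono_on_of_le_Ioo (μ := MeasureTheory.volume) hyx
      (f := t) (g := fun _ => u) (hint _ _ hy hx) (by simp)
      (fun s hs => hT.1.le_of_lt (ht s (hdom.out hy hx ⟨hs.1.le, hs.2.le⟩)) hu hs.2)
    simp only [intervalIntegral.integral_const, smul_eq_mul] at this
    rw [intervalIntegral.integral_symm]
    linarith

/-- The subgradient inequality in terms of real numbers. -/
lemma subdiff_real {f : ℝ → EReal} (hbot : ∀ x, f x ≠ ⊥) {x y u : ℝ} (hu : u ∈ subdiff f x)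
    (hy : f y ≠ ⊤) : u * (y - x) + (f x).toReal ≤ (f y).toReal := by
  have h := hu.2 y
  rw [← EReal.coe_toReal hu.1 (hbot x), ← EReal.coe_toReal hy (hbot y)] at h
  exact_mod_cast h

lemma subdiff_monotone {f : ℝ → EReal} (hbot : ∀ x, f x ≠ ⊥) : MonotoneOp (subdiff f) := by
  intro x u y v hu hv
  have h1 := subdiff_real hbot hu hv.1
  have h2 := subdiff_real hbot hv hu.1
  linarith

lemma exists_potential {T : ℝ → Set ℝ} (hT : MaxMonotoneOp T) :
    ∃ f : ℝ → EReal, (∀ x, f x ≠ ⊥) ∧ (∃ x : ℝ, f x ≠ ⊤) ∧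
      LowerSemicontinuous f ∧ ERealConvex f ∧ subdiff f = T := by
  obtain ⟨h, hh⟩ := exists_primitive hT
  obtain ⟨x₀, u₀, h₀⟩ := hT.exists_mem
  set f : ℝ → EReal := fun x =>
    ⨆ p : {p : ℝ × ℝ // p.2 ∈ T p.1}, ((p.1.2 * (x - p.1.1) + h p.1.1 : ℝ) : EReal) with hf
  have hle : ∀ x y u, u ∈ T y → ((u * (x - y) + h y : ℝ) : EReal) ≤ f x := fun x y u hu =>
    le_iSup (fun p : {p : ℝ × ℝ // p.2 ∈ T p.1} =>
      ((p.1.2 * (x - p.1.1) + h p.1.1 : ℝ) : EReal)) ⟨(y, u), hu⟩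
  have hbot : ∀ x, f x ≠ ⊥ := fun x hx => by
    have := hle x x₀ u₀ h₀
    rw [hx, le_bot_iff] at this
    exact EReal.coe_ne_bot _ this
  have hdom : ∀ x, (T x).Nonempty → f x = (h x : EReal) := by
    intro x hx
    apply le_antisymm
    · refine iSup_le fun p => ?_
      have := hh p.1.1 x p.1.2 p.2 hx
      exact_mod_cast (by linarith : p.1.2 * (x - p.1.1) + h p.1.1 ≤ h x)
    · obtain ⟨u, hu⟩ := hx
      simpa using hle x x u hu
  have hsub : ∀ x, T x ⊆ subdiff f x := by
    intro x u hu
    have hx := hdom x ⟨u, hu⟩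
    refine ⟨by rw [hx]; exact EReal.coe_ne_top _, fun y => ?_⟩
    rw [hx, ← EReal.coe_add]
    exact hle y x u hu
  refine ⟨f, hbot, ⟨x₀, (hsub x₀ h₀).1⟩, ?_, ?_, ?_⟩
  · refine lowerSemicontinuous_iSup fun p => Continuous.lowerSemicontinuous ?_
    exact continuous_coe_real_ereal.comp (by fun_prop)
  · intro x y a b ha hb hab
    refine iSup_le fun p => ?_
    have e : p.1.2 * (a * x + b * y - p.1.1) + h p.1.1 =
        a * (p.1.2 * (x - p.1.1) + h p.1.1) + b * (p.1.2 * (y - p.1.1) + h p.1.1) := by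
      obtain rfl : b = 1 - a := by linarith
      ring
    rw [e, EReal.coe_add, EReal.coe_mul, EReal.coe_mul]
    exact add_le_add
      (mul_le_mul_of_nonneg_left (hle x _ _ p.2) (by exact_mod_cast ha))
      (mul_le_mul_of_nonneg_left (hle y _ _ p.2) (by exact_mod_cast hb))
  · funext x
    exact Subset.antisymm (hT.2 _ (subdiff_monotone hbot) hsub x) (hsub x)

/-! ### Regularity of convex functions on the line -/

lemma convexOn_toReal {f : ℝ → EReal} (hbot : ∀ x, f x ≠ ⊥) (hc : ERealConvex f) :
    ConvexOn ℝ (effDom f) (fun x => (f x).toReal) := by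
  have key : ∀ x y a b : ℝ, f x ≠ ⊤ → f y ≠ ⊤ → 0 ≤ a → 0 ≤ b → a + b = 1 →
      f (a * x + b * y) ≤ ((a * (f x).toReal + b * (f y).toReal : ℝ) : EReal) := by
    intro x y a b hx hy ha hb hab
    have h := hc x y a b ha hb hab
    rw [← EReal.coe_toReal hx (hbot x), ← EReal.coe_toReal hy (hbot y)] at h
    exact_mod_cast h
  have fin : ∀ x y a b : ℝ, f x ≠ ⊤ → f y ≠ ⊤ → 0 ≤ a → 0 ≤ b → a + b = 1 →
      f (a * x + b * y) ≠ ⊤ := fun x y a b hx hy ha hb hab =>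
    ((key x y a b hx hy ha hb hab).trans_lt (EReal.coe_lt_top _)).ne
  refine ⟨fun x hx y hy a b ha hb hab => fin x y a b hx hy ha hb hab,
    fun x hx y hy a b ha hb hab => ?_⟩
  have h := key x y a b hx hy ha hb hab
  rw [← EReal.coe_toReal (fin x y a b hx hy ha hb hab) (hbot _)] at h
  exact_mod_cast h

/-- One-sided upper semicontinuity: near `x`, on the side of another point `z` of the domain,
the chord from `x` to `z` bounds `f`. -/
lemma eventually_lt_of_chord {f : ℝ → EReal} (hbot : ∀ x, f x ≠ ⊥) (hc : ERealConvex f)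
    {x z : ℝ} (hx : f x ≠ ⊤) (hz : f z ≠ ⊤) (hxz : z ≠ x) {b : EReal} (hb : f x < b) :
    ∀ᶠ y in 𝓝 x, 0 ≤ (y - x) / (z - x) → f y < b := by
  have hne : z - x ≠ 0 := sub_ne_zero.2 hxz
  have hcont : Continuous fun y : ℝ =>
      (((1 - (y - x) / (z - x)) * (f x).toReal + (y - x) / (z - x) * (f z).toReal : ℝ) : EReal) :=
    continuous_coe_real_ereal.comp (by fun_prop)
  have h1 := (hcont.tendsto x).eventually_lt_const (u := b)
    (by simpa [EReal.coe_toReal hx (hbot x)] using hb)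
  have h2 : ∀ᶠ y in 𝓝 x, (y - x) / (z - x) < 1 := by
    have : Continuous fun y : ℝ => (y - x) / (z - x) := by fun_prop
    exact (this.tendsto x).eventually_lt_const (by simp)
  filter_upwards [h1, h2] with y hy1 hy2 hy0
  refine lt_of_le_of_lt ?_ hy1
  have h := hc x z (1 - (y - x) / (z - x)) ((y - x) / (z - x)) (by linarith) hy0 (by ring)
  have e : (1 - (y - x) / (z - x)) * x + (y - x) / (z - x) * z = y := by
    field_simp
    ring
  rw [e, ← EReal.coe_toReal hx (hbot x), ← EReal.coe_toReal hz (hbot z)] at h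
  exact_mod_cast h

lemma continuousOn_effDom {f : ℝ → EReal} (hbot : ∀ x, f x ≠ ⊥) (hl : LowerSemicontinuous f)
    (hc : ERealConvex f) : ContinuousOn f (effDom f) := by
  intro x hx
  refine tendsto_order.2 ⟨fun a ha => (hl x a ha).filter_mono nhdsWithin_le_nhds,
    fun b hb => ?_⟩
  rw [eventually_nhdsWithin_iff]
  have hr : ∀ᶠ y in 𝓝 x, x < y → y ∈ effDom f → f y < b := by
    by_cases h : ∃ z, x < z ∧ f z ≠ ⊤
    · obtain ⟨z, hz, hfz⟩ := h
      filter_upwards [eventually_lt_of_chord hbot hc hx hfz hz.ne' hb] with y hy hxy _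
      exact hy (div_nonneg (sub_pos.2 hxy).le (sub_pos.2 hz).le)
    · exact Eventually.of_forall fun y hxy hy => absurd ⟨y, hxy, hy⟩ h
  have hle : ∀ᶠ y in 𝓝 x, y < x → y ∈ effDom f → f y < b := by
    by_cases h : ∃ z, z < x ∧ f z ≠ ⊤
    · obtain ⟨z, hz, hfz⟩ := h
      filter_upwards [eventually_lt_of_chord hbot hc hx hfz hz.ne hb] with y hy hxy _
      exact hy (div_nonneg_of_nonpos (sub_neg.2 hxy).le (sub_neg.2 hz).le)
    · exact Eventually.of_forall fun y hxy hy => absurd ⟨y, hxy, hy⟩ h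
  filter_upwards [hr, hle] with y h1 h2 hy
  rcases lt_trichotomy x y with h | rfl | h
  · exact h1 h hy
  · exact hb
  · exact h2 h hy

lemma subdiff_nonempty {f : ℝ → EReal} (hbot : ∀ x, f x ≠ ⊥) (hc : ERealConvex f)
    {x : ℝ} (hx : x ∈ interior (effDom f)) : (subdiff f x).Nonempty := by
  have hg := convexOn_toReal hbot hc
  set g : ℝ → ℝ := fun x => (f x).toReal with hgdef
  have hxd : f x ≠ ⊤ := interior_subset hx
  refine ⟨derivWithin g (Ioi x) x, hxd, fun y => ?_⟩
  by_cases hy : f y = ⊤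
  · rw [hy]
    exact le_top
  rw [← EReal.coe_toReal hxd (hbot x), ← EReal.coe_toReal hy (hbot y)]
  have : derivWithin g (Ioi x) x * (y - x) + g x ≤ g y := by
    rcases lt_trichotomy x y with h | rfl | h
    · have h1 := hg.rightDeriv_le_slope_of_mem_interior hx hy h
      rw [slope_def_field, le_div_iff₀ (sub_pos.2 h)] at h1
      linarith
    · simp
    · have h1 := hg.slope_le_leftDeriv_of_mem_interior hy hx h
      have h2 := h1.trans (hg.leftDeriv_le_rightDeriv_of_mem_interior hx)
      rw [slope_def_field, div_le_iff₀ (sub_pos.2 h)] at h2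
      linarith
  exact_mod_cast this

/-! ### The three types of intervals -/

lemma isAffineOn_of_const {f : ℝ → EReal} (hbot : ∀ x, f x ≠ ⊥) {s : Set ℝ}
    (h : SingleConstOn (subdiff f) s) : IsAffineOn f s := by
  obtain ⟨c, hcs⟩ := h
  rcases s.eq_empty_or_nonempty with rfl | ⟨x₀, hx₀⟩
  · exact ⟨0, 0, by simp⟩
  have hmem : ∀ x ∈ s, c ∈ subdiff f x := fun x hx => by simp [hcs x hx]
  refine ⟨c, (f x₀).toReal - c * x₀, fun x hx => ?_⟩
  have h1 := subdiff_real hbot (hmem x hx) (hmem x₀ hx₀).1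
  have h2 := subdiff_real hbot (hmem x₀ hx₀) (hmem x hx).1
  rw [← EReal.coe_toReal (hmem x hx).1 (hbot x)]
  exact_mod_cast (by linarith : (f x).toReal = c * x + ((f x₀).toReal - c * x₀))

lemma isStrictConvexDiffOn_of_strictMono {f : ℝ → EReal} (hbot : ∀ x, f x ≠ ⊥) {s : Set ℝ}
    (hs : IsOpen s) (hconv : Convex ℝ s) (h : SingleContStrictMonoOn (subdiff f) s) :
    IsStrictConvexDiffOn f s := by
  obtain ⟨g, hgs, hgc, hgm⟩ := h
  have hmem : ∀ x ∈ s, g x ∈ subdiff f x := fun x hx => by simp [hgs x hx]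
  have hder : ∀ x ∈ s, HasDerivAt (fun x => (f x).toReal) (g x) x := by
    intro x hx
    have hgx : Tendsto (fun y => |g y - g x|) (𝓝 x) (𝓝 0) := by
      have := (hgc.continuousAt (hs.mem_nhds hx)).sub_const (g x)
      simpa using Tendsto.abs this
    rw [hasDerivAt_iff_isLittleO, Asymptotics.isLittleO_iff]
    intro c hcpos
    filter_upwards [hgx.eventually_lt_const hcpos, hs.mem_nhds hx] with y hy hys
    have h1 := subdiff_real hbot (hmem x hx) (hmem y hys).1
    have h2 := subdiff_real hbot (hmem y hys) (hmem x hx).1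
    have e : (f y).toReal - (f x).toReal - (y - x) • g x
        = (f y).toReal - (f x).toReal - g x * (y - x) := by
      rw [smul_eq_mul, mul_comm]
    rw [e, Real.norm_eq_abs, Real.norm_eq_abs, abs_of_nonneg (by linarith)]
    calc (f y).toReal - (f x).toReal - g x * (y - x) ≤ (g y - g x) * (y - x) := by linarith
      _ ≤ |g y - g x| * |y - x| := by rw [← abs_mul]; exact le_abs_self _
      _ ≤ c * |y - x| := by gcongr
  refine ⟨fun x => (f x).toReal, fun x hx => (EReal.coe_toReal (hmem x hx).1 (hbot x)).symm, ?_,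
    fun x hx => (hder x hx).differentiableAt⟩
  refine StrictMonoOn.strictConvexOn_of_deriv hconv
    (fun x hx => (hder x hx).continuousAt.continuousWithinAt) ?_
  rw [hs.interior_eq]
  intro x hx y hy hxy
  rw [(hder x hx).deriv, (hder y hy).deriv]
  exact hgm hx hy hxy

/-- If `f` were finite at `x ∈ s`, then either `x` is its only point of finiteness and
`∂f(x) = ℝ`, or there are interior points of the domain in `s` arbitrarily close to `x`. -/
lemma eq_top_of_emptyOn {f : ℝ → EReal} (hbot : ∀ x, f x ≠ ⊥) (hc : ERealConvex f) {s : Set ℝ}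
    (hs : IsOpen s) (h : EmptyOn (subdiff f) s) : ∀ x ∈ s, f x = ⊤ := by
  intro x hx
  by_contra hfx
  by_cases hz : ∃ z, z ≠ x ∧ f z ≠ ⊤
  · obtain ⟨z, hzx, hfz⟩ := hz
    have hord : OrdConnected (effDom f) := (convexOn_toReal hbot hc).1.ordConnected
    have hnear : x ∈ closure (interior (uIcc x z)) := by
      rw [uIcc, interior_Icc, closure_Ioo (by simpa [eq_comm] using hzx)]
      exact left_mem_uIcc
    obtain ⟨y, hys, hyi⟩ := mem_closure_iff.1 hnear s hs hx
    have := subdiff_nonempty hbot hc (interior_mono (hord.uIcc_subset hfx hfz) hyi)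
    rw [h y hys] at this
    exact not_nonempty_empty this
  · have h0 : (0 : ℝ) ∈ subdiff f x := by
      refine ⟨hfx, fun y => ?_⟩
      rcases eq_or_ne y x with rfl | hy
      · simp
      · rw [not_not.1 fun hfy => hz ⟨y, hy, hfy⟩]
        exact le_top
    rw [h x hx] at h0
    exact h0

lemma Breakpoints.isOpen_itv (B : Breakpoints) (i : ℕ) : IsOpen (B.itv i) :=
  isOpen_Ioo.preimage continuous_coe_real_ereal

lemma Breakpoints.convex_itv (B : Breakpoints) (i : ℕ) : Convex ℝ (B.itv i) := by
  refine OrdConnected.convex ⟨fun x hx y hy s hs => ⟨?_, ?_⟩⟩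
  · exact hx.1.trans_le (by exact_mod_cast hs.1)
  · exact lt_of_le_of_lt (by exact_mod_cast hs.2) hy.2

/-- If `T ∈ 𝒯` is maximal monotone, then `T = ∂f` for some proper, lsc, convex
function `f`, and every proper, lsc, convex function `f` with `∂f = T` belongs
to the class `F`. -/
theorem stmt9 (T : ℝ → Set ℝ) (hT : MemT T) (hmax : MaxMonotoneOp T) :
    (∃ f : ℝ → EReal, (∀ x, f x ≠ ⊥) ∧ (∃ x : ℝ, f x ≠ ⊤) ∧
      LowerSemicontinuous f ∧ ERealConvex f ∧ subdiff f = T) ∧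
    ∀ f : ℝ → EReal, (∀ x, f x ≠ ⊥) → (∃ x : ℝ, f x ≠ ⊤) →
      LowerSemicontinuous f → ERealConvex f → subdiff f = T → MemF f := by
  refine ⟨exists_potential hmax, fun f hbot _ hl hc hf => ?_⟩
  obtain ⟨B, T', hT', hsub, hB⟩ := hT
  obtain rfl : T = T' := funext fun x => Subset.antisymm (hsub x) (hmax.2 T' hT'.1 hsub x)
  subst hf
  refine ⟨B, hbot, hl, hc, continuousOn_effDom hbot hl hc, fun i hi => ?_⟩
  rcases hB i hi with h | h | h
  · exact Or.inl (isAffineOn_of_const hbot h)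
  · exact Or.inr (Or.inl
      (isStrictConvexDiffOn_of_strictMono hbot (B.isOpen_itv i) (B.convex_itv i) h))
  · exact Or.inr (Or.inr (eq_top_of_emptyOn hbot hc (B.isOpen_itv i) h))
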